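/- The expected cost of the optimal policy equals its expected total revenue: E[C(π*)] = E[μ*], where μ* = Σ_{e ∈ E} μ(e). -/

import Mathlib

/-!
Common framework for the Stochastic Submodular Cover problem
(Hellerstein–Kletenik–Parthasarathy, "A Tight Bound for Stochastic Submodular Cover").
-/

namespace SSC

open Finset
open scoped Classical

noncomputable section

variable {E O : Type*}

/-- A subrealization assigns to each item either a state or `none` (unassigned).
A realization corresponds to the case where every item is assigned. -/
abbrev Sub (E O : Type*) := E → Option O

/-- `subext ψ ψ'` means `ψ ⊆ ψ'` as partial assignments of states to items. -/
def subext (ψ ψ' : Sub E O) : Prop := ∀ e o, ψ e = some o → ψ' e = some o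

/-- `ssubext ψ ψ'` means `ψ ⊂ ψ'` (strict extension). -/
def ssubext (ψ ψ' : Sub E O) : Prop := subext ψ ψ' ∧ ψ ≠ ψ'

/-- Extend a subrealization `ψ` by assigning state `o` to item `e`. -/
def updateSub [DecidableEq E] (ψ : Sub E O) (e : E) (o : O) : Sub E O :=
  fun e' => if e' = e then some o else ψ e'

/-- View a (full) realization as a subrealization. -/
def toSub (φ : E → O) : Sub E O := fun e => some (φ e)

variable [Fintype E] [DecidableEq E] [Fintype O] [DecidableEq O]

/-- An instance of the Stochastic Submodular Cover problem: positive item costs `c`,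
a probability mass function `p` on realizations with mutually independent item states,
and a utility function `f` on subrealizations which is zero on the empty subrealization,
nonnegative, monotone and submodular (pointwise polymatroid), and equal to the goal
value `Q > 0` on every full realization (coverability). -/
structure Problem (E O : Type*) [Fintype E] [DecidableEq E] [Fintype O] [DecidableEq O] where
  c : E → ℝ
  c_pos : ∀ e, 0 < c e
  p : (E → O) → ℝ
  p_nonneg : ∀ φ, 0 ≤ p φ
  p_sum : ∑ φ : E → O, p φ = 1
  indep : ∀ φ : E → O, p φ = ∏ e : E, ∑ φ' : E → O, if φ' e = φ e then p φ' else 0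
  f : Sub E O → ℝ
  f_nonneg : ∀ ψ, 0 ≤ f ψ
  f_empty : f (fun _ => none) = 0
  f_mono : ∀ ψ ψ' : Sub E O, subext ψ ψ' → f ψ ≤ f ψ'
  f_submod : ∀ (ψ ψ' : Sub E O) (e : E) (o : O), subext ψ ψ' → ψ' e = none →
      f (updateSub ψ' e o) - f ψ' ≤ f (updateSub ψ e o) - f ψ
  Q : ℝ
  Q_pos : 0 < Q
  f_cover : ∀ φ : E → O, f (toSub φ) = Q

variable (M : Problem E O)

/-- Expectation of a random variable `X` with respect to the random realization `Φ`. -/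
def Ex (X : (E → O) → ℝ) : ℝ := ∑ φ : E → O, M.p φ * X φ

/-- Probability of an event `A` of the random realization `Φ`. -/
def Pr (A : (E → O) → Prop) : ℝ := ∑ φ : E → O, if A φ then M.p φ else 0

/-- Conditional expectation `E[X | A]`. -/
def cEx (X : (E → O) → ℝ) (A : (E → O) → Prop) : ℝ :=
  (∑ φ : E → O, if A φ then M.p φ * X φ else 0) / Pr M A

/-- The random marginal increase in utility `F_ψ(e)` from observing the state of `e`. -/
def Fm (ψ : Sub E O) (e : E) (φ : E → O) : ℝ := M.f (updateSub ψ e (φ e)) - M.f ψ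

/-- The unit price `υ(e|ψ) = c(e) / E[F_ψ(e)]`. -/
def price (ψ : Sub E O) (e : E) : ℝ := M.c e / Ex M (Fm M ψ e)

/-- An adaptive covering policy: at every subrealization `ψ` with `f ψ < Q` it selects an
item outside `dom ψ`. -/
def IsPolicy (π : Sub E O → E) : Prop := ∀ ψ : Sub E O, M.f ψ < M.Q → ψ (π ψ) = none

/-- The `α`-approximate adaptive greedy policy: at every `ψ` with `f ψ < Q` the unit price of
the selected item `σ ψ` is at most `α` times the minimum unit price, i.e.
`υ(σ ψ | ψ) ≤ α · υ(e | ψ)` for every `e ∉ dom ψ`, written multiplicatively so that infinite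
unit prices (zero expected marginal utility) are handled correctly. -/
def IsGreedy (α : ℝ) (σ : Sub E O → E) : Prop :=
  IsPolicy M σ ∧
    ∀ ψ : Sub E O, M.f ψ < M.Q → ∀ e : E, ψ e = none →
      M.c (σ ψ) * Ex M (Fm M ψ e) ≤ α * M.c e * Ex M (Fm M ψ (σ ψ))

/-- One step of executing policy `π` on realization `φ`. -/
def stepPol (π : Sub E O → E) (φ : E → O) (ψ : Sub E O) : Sub E O :=
  if M.f ψ < M.Q then updateSub ψ (π ψ) (φ (π ψ)) else ψ

/-- The subrealization reached after `n` steps of executing `π` on `φ`. -/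
def execAux (π : Sub E O → E) (φ : E → O) : ℕ → Sub E O
  | 0 => fun _ => none
  | n + 1 => stepPol M π φ (execAux π φ n)

/-- The cover `Ψ(π)` constructed by executing `π` on realization `φ`. -/
def cover (π : Sub E O → E) (φ : E → O) : Sub E O := execAux M π φ (Fintype.card E)

/-- `ψ` is visited when executing `π` on realization `φ`. -/
def visits (π : Sub E O → E) (φ : E → O) (ψ : Sub E O) : Prop := ∃ n, execAux M π φ n = ψ

/-- The set `S(π)` of items selected when executing `π` on `φ`. -/
def Ssel (π : Sub E O → E) (φ : E → O) : Finset E :=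
  Finset.univ.filter fun e => cover M π φ e ≠ none

/-- The cost `C(π)` incurred when executing `π` on `φ`. -/
def C (π : Sub E O → E) (φ : E → O) : ℝ := ∑ e ∈ Ssel M π φ, M.c e

/-- An adaptive covering policy of minimum expected cost. -/
def IsOptimal (π : Sub E O → E) : Prop :=
  IsPolicy M π ∧ ∀ π' : Sub E O → E, IsPolicy M π' → Ex M (C M π) ≤ Ex M (C M π')

/-- `N(π)`: the non-leaf nodes of the decision tree of `π` — subrealizations with
`f ψ < Q` that are visited with positive probability. -/
def Nnodes (π : Sub E O → E) : Finset (Sub E O) :=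
  Finset.univ.filter fun ψ => M.f ψ < M.Q ∧ 0 < Pr M fun φ => visits M π φ ψ

/-- The event `ψ ↝ i`, for a marker located at utility value `b = f(ρ_i)`:
`ψ` is the last subrealization visited by `σ` (on the given realization) whose
utility is at most `b`. -/
def leadsTo (σ : Sub E O → E) (b : ℝ) (ψ : Sub E O) (φ : E → O) : Prop :=
  visits M σ φ ψ ∧ M.f ψ ≤ b ∧
    ∀ ψ' : Sub E O, visits M σ φ ψ' → M.f ψ' ≤ b → subext ψ' ψ

/-- The revenue `λ_i = υ_ψ · ε_i` collected by `σ` from the marker located at utility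
value `b = f(ρ_i)` with interval length `εi`, where `ψ` is the unique subrealization
with `ψ ↝ i`. -/
def lam (σ : Sub E O → E) (b εi : ℝ) (φ : E → O) : ℝ :=
  ∑ ψ : Sub E O, if leadsTo M σ b ψ φ then price M ψ (σ ψ) * εi else 0

/-- The revenue `μ(e)` collected by the optimal policy `πs` from item `e`
(relative to the greedy policy `σ`, both executed on the same realization). -/
def mu (σ πs : Sub E O → E) (e : E) (φ : E → O) : ℝ :=
  if e ∈ Ssel M πs φ then
    if e ∈ Ssel M σ φ then
      ∑ ψ : Sub E O,
        if visits M σ φ ψ ∧ M.f ψ < M.Q ∧ σ ψ = e then price M ψ e * Fm M ψ e φ else 0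
    else M.c e
  else 0

/-- The total revenue `μ*` collected by the optimal policy. -/
def muStar (σ πs : Sub E O → E) (φ : E → O) : ℝ := ∑ e : E, mu M σ πs e φ

/-- Replay of the internal state of policy `πs` in the second stage of the hybrid policy:
starting from the empty subrealization, repeatedly query `πs`; an item whose state is
already recorded in `ψ'` is not re-selected, its recorded state being used instead. -/
def replayAux (πs : Sub E O → E) (ψ' : Sub E O) : ℕ → Sub E O
  | 0 => fun _ => none
  | n + 1 =>
    if M.f (replayAux πs ψ' n) < M.Q then
      match ψ' (πs (replayAux πs ψ' n)) with
      | some o => updateSub (replayAux πs ψ' n) (πs (replayAux πs ψ' n)) o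
      | none => replayAux πs ψ' n
    else replayAux πs ψ' n

/-- The hybrid policy `π^ψ0`: follow `σ` until `ψ0` is visited, then switch to executing
`πs` from the root of its tree, never re-selecting an item of `dom ψ0` and using the
state recorded in `ψ0` instead. -/
def hybrid (σ πs : Sub E O → E) (ψ0 : Sub E O) : Sub E O → E := fun ψ' =>
  if subext ψ0 ψ' then πs (replayAux M πs ψ' (Fintype.card E)) else σ ψ'

/-- `δ⁺_ψ0(e)`: the marginal utility obtained by the hybrid policy `π^ψ0` when it selects
`e` during its second stage, and `0` if `e` is not selected in the second stage. -/
def deltaPlus (σ πs : Sub E O → E) (ψ0 : Sub E O) (e : E) (φ : E → O) : ℝ :=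
  ∑ ψ' : Sub E O,
    if subext ψ0 ψ' ∧ visits M (hybrid M σ πs ψ0) φ ψ' ∧
        ssubext ψ' (cover M (hybrid M σ πs ψ0) φ) ∧ hybrid M σ πs ψ0 ψ' = e
    then Fm M ψ' e φ else 0


/-! Let `σ` select `e` at `ψ`. The marginal utility `F_ψ(e)` depends only on the state of `e`,
whereas whether `σ` reaches `ψ`, and whether either policy selects `e` at all, are settled before
the state of `e` is observed. By independence the expected revenue on this event is its probability
times `υ_ψ · E[F_ψ(e)] = c(e)`, which is also the expected cost incurred for `e` there. The unit
price is finite because, by submodularity, below `Q` some unselected item has positive expected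
marginal utility, and greediness transfers this to the item selected by `σ`. -/

lemma Ex_sub (X Y : (E → O) → ℝ) : Ex M (fun φ => X φ - Y φ) = Ex M X - Ex M Y := by
  simp only [Ex, mul_sub, Finset.sum_sub_distrib]

lemma Ex_const (a : ℝ) : Ex M (fun _ => a) = a := by
  simp only [Ex, ← Finset.sum_mul, M.p_sum, one_mul]

lemma Ex_const_mul (a : ℝ) (X : (E → O) → ℝ) : Ex M (fun φ => a * X φ) = a * Ex M X := by
  simp only [Ex, Finset.mul_sum, mul_left_comm]

lemma Ex_sum {ι : Type*} (s : Finset ι) (X : ι → (E → O) → ℝ) :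
    Ex M (fun φ => ∑ i ∈ s, X i φ) = ∑ i ∈ s, Ex M (X i) := by
  simp only [Ex, Finset.mul_sum]
  exact Finset.sum_comm

lemma Ex_mono {X Y : (E → O) → ℝ} (h : ∀ φ, X φ ≤ Y φ) : Ex M X ≤ Ex M Y :=
  Finset.sum_le_sum fun φ _ => mul_le_mul_of_nonneg_left (h φ) (M.p_nonneg φ)

section Submodularity

variable {M}

lemma f_piecewise_sub_le {ψ : Sub E O} (φ : E → O) {A : Finset E} (hA : ∀ e ∈ A, ψ e = none) :
    M.f (A.piecewise (toSub φ) ψ) - M.f ψ ≤ ∑ e ∈ A, Fm M ψ e φ := by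
  induction A using Finset.induction_on with
  | empty => simp
  | insert a A ha ih =>
    rw [Finset.forall_mem_insert] at hA
    have piecewise_insert : (insert a A).piecewise (toSub φ) ψ =
        updateSub (A.piecewise (toSub φ) ψ) a (φ a) := by
      ext1 e
      simp [Finset.piecewise_insert, Function.update_apply, updateSub, toSub]
    have subext_piecewise : subext ψ (A.piecewise (toSub φ) ψ) := by
      intro e o he
      have heA : e ∉ A := fun h => by simp [hA.2 e h] at he
      rwa [Finset.piecewise_eq_of_notMem _ _ _ heA]
    have submod : M.f (updateSub (A.piecewise (toSub φ) ψ) a (φ a)) -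
        M.f (A.piecewise (toSub φ) ψ) ≤ Fm M ψ a φ :=
      M.f_submod _ _ a (φ a) subext_piecewise (by simp [ha, hA.1])
    rw [piecewise_insert, Finset.sum_insert ha]
    linarith [ih hA.2]

lemma Q_sub_f_le_sum_Fm (ψ : Sub E O) (φ : E → O) :
    M.Q - M.f ψ ≤ ∑ e with ψ e = none, Fm M ψ e φ := by
  have completion : ({e | ψ e = none} : Finset E).piecewise (toSub φ) ψ =
      toSub fun e => (ψ e).getD (φ e) := by
    ext1 e
    cases he : ψ e <;> simp [Finset.piecewise, toSub, he]
  rw [← M.f_cover fun e => (ψ e).getD (φ e), ← completion]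
  exact f_piecewise_sub_le φ fun e he => (Finset.mem_filter.1 he).2

lemma exists_Ex_Fm_pos {ψ : Sub E O} (hψ : M.f ψ < M.Q) :
    ∃ e, ψ e = none ∧ 0 < Ex M (Fm M ψ e) := by
  have sum_pos : 0 < ∑ e with ψ e = none, Ex M (Fm M ψ e) :=
    calc 0 < M.Q - M.f ψ := sub_pos.2 hψ
      _ = Ex M (fun _ => M.Q - M.f ψ) := (Ex_const M _).symm
      _ ≤ Ex M (fun φ => ∑ e with ψ e = none, Fm M ψ e φ) := Ex_mono M (Q_sub_f_le_sum_Fm ψ)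
      _ = ∑ e with ψ e = none, Ex M (Fm M ψ e) := Ex_sum M _ _
  by_contra! nonpos
  exact sum_pos.not_ge <| Finset.sum_nonpos fun e he => nonpos e (Finset.mem_filter.1 he).2

lemma IsGreedy.Ex_Fm_ne_zero {α : ℝ} {σ : Sub E O → E} (hσ : IsGreedy M α σ) {ψ : Sub E O}
    (hψ : M.f ψ < M.Q) : Ex M (Fm M ψ (σ ψ)) ≠ 0 := by
  intro h0
  obtain ⟨e, he, pos⟩ := exists_Ex_Fm_pos hψ
  have le_zero := hσ.2 ψ hψ e he
  rw [h0, mul_zero] at le_zero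
  exact le_zero.not_gt (mul_pos (M.c_pos _) pos)

end Submodularity

/-- Exchange of the coordinates in `s` between two realizations. It preserves the law of a pair of
independent copies of `Φ`, which is how independence of the items enters. -/
def exchange (s : Set E) : Equiv.Perm ((E → O) × (E → O)) where
  toFun x := (s.piecewise x.2 x.1, s.piecewise x.1 x.2)
  invFun x := (s.piecewise x.2 x.1, s.piecewise x.1 x.2)
  left_inv x := by ext e <;> by_cases he : e ∈ s <;> simp [he]
  right_inv x := by ext e <;> by_cases he : e ∈ s <;> simp [he]

lemma p_mul_p_exchange (s : Set E) (x : (E → O) × (E → O)) :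
    M.p (exchange s x).1 * M.p (exchange s x).2 = M.p x.1 * M.p x.2 := by
  simp only [M.indep (exchange s x).1, M.indep (exchange s x).2, M.indep x.1, M.indep x.2,
    ← Finset.prod_mul_distrib]
  refine Finset.prod_congr rfl fun e _ => ?_
  by_cases he : e ∈ s
  · simp only [exchange, Equiv.coe_fn_mk, Set.piecewise_eq_of_mem _ _ _ he, mul_comm]
  · simp only [exchange, Equiv.coe_fn_mk, Set.piecewise_eq_of_notMem _ _ _ he]

lemma Ex_mul_of_dependsOn {s : Set E} {X Y : (E → O) → ℝ}
    (hX : DependsOn X s) (hY : DependsOn Y sᶜ) :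
    Ex M (fun φ => X φ * Y φ) = Ex M X * Ex M Y := by
  have swap_eq (x : (E → O) × (E → O)) :
      X (exchange s x).1 * Y (exchange s x).2 = X x.2 * Y x.2 := by
    congr 1
    · exact hX fun e he => Set.piecewise_eq_of_mem _ _ _ he
    · exact hY fun e he => Set.piecewise_eq_of_notMem _ _ _ he
  symm
  calc Ex M X * Ex M Y
      = ∑ x : (E → O) × (E → O), M.p x.1 * M.p x.2 * (X x.1 * Y x.2) := by
        simp only [Ex, Finset.sum_mul_sum, Fintype.sum_prod_type, mul_mul_mul_comm]
    _ = ∑ x : (E → O) × (E → O), M.p (exchange s x).1 * M.p (exchange s x).2 *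
          (X (exchange s x).1 * Y (exchange s x).2) :=
        (Equiv.sum_comp (exchange s) _).symm
    _ = ∑ x : (E → O) × (E → O), M.p x.1 * (M.p x.2 * (X x.2 * Y x.2)) := by
        simp only [p_mul_p_exchange, swap_eq, mul_assoc]
    _ = Ex M (fun φ => X φ * Y φ) := by
        simp only [Fintype.sum_prod_type, ← Finset.mul_sum, ← Finset.sum_mul, M.p_sum, one_mul, Ex]

lemma Ex_ite_eq_Pr_mul {s : Set E} {A : (E → O) → Prop} [DecidablePred A] {X : (E → O) → ℝ}
    (hA : DependsOn A sᶜ) (hX : DependsOn X s) :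
    Ex M (fun φ => if A φ then X φ else 0) = Pr M A * Ex M X := by
  have indicator_dependsOn : DependsOn (fun φ => if A φ then (1 : ℝ) else 0) sᶜ :=
    fun φ φ' h => by simp only [hA h]
  have Pr_eq : Pr M A = Ex M (fun φ => if A φ then 1 else 0) := by
    simp only [Pr, Ex, mul_ite, mul_one, mul_zero]
    congr!
  rw [Pr_eq, mul_comm, ← Ex_mul_of_dependsOn M hX indicator_dependsOn]
  simp only [mul_ite, mul_one, mul_zero]

lemma Fm_dependsOn (ψ : Sub E O) (e : E) : DependsOn (Fm M ψ e) {e} := fun φ φ' h => by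
  simp only [Fm, h e rfl]

lemma Ex_cost_sub_price_mul_Fm_eq_zero {ψ : Sub E O} {e : E} (h : Ex M (Fm M ψ e) ≠ 0) :
    Ex M (fun φ => M.c e - price M ψ e * Fm M ψ e φ) = 0 := by
  rw [Ex_sub, Ex_const, Ex_const_mul, price, div_mul_cancel₀ _ h, sub_self]

/-- The domain `dom ψ` of a subrealization. -/
def dom (ψ : Sub E O) : Set E := {e | ψ e ≠ none}

lemma mem_dom_stepPol {π : Sub E O → E} {φ : E → O} {ψ : Sub E O} {e : E} :
    e ∈ dom (stepPol M π φ ψ) ↔ e ∈ dom ψ ∨ M.f ψ < M.Q ∧ π ψ = e := by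
  by_cases hψ : M.f ψ < M.Q
  · by_cases he : e = π ψ
    · simp [dom, stepPol, updateSub, hψ, he]
    · simp [dom, stepPol, updateSub, hψ, he, Ne.symm he]
  · simp [stepPol, hψ]

lemma mem_dom_execAux {π : Sub E O → E} {φ : E → O} {n : ℕ} {e : E} :
    e ∈ dom (execAux M π φ n) ↔
      ∃ k < n, M.f (execAux M π φ k) < M.Q ∧ π (execAux M π φ k) = e := by
  induction n with
  | zero => simp [dom, execAux]
  | succ n ih => rw [execAux, mem_dom_stepPol, ih, Nat.exists_lt_succ_right]

lemma execAux_congr {π : Sub E O → E} {φ φ' : E → O} {n : ℕ}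
    (h : ∀ e ∈ dom (execAux M π φ n), φ e = φ' e) :
    execAux M π φ n = execAux M π φ' n := by
  induction n with
  | zero => rfl
  | succ n ih =>
    have ih := ih fun e he => h e ((mem_dom_stepPol M).2 (Or.inl he))
    simp only [execAux, stepPol, ← ih]
    split_ifs with hQ
    · rw [h _ ((mem_dom_stepPol M).2 (Or.inr ⟨hQ, rfl⟩))]
    · rfl

lemma visits_dependsOn (π : Sub E O → E) (ψ : Sub E O) :
    DependsOn (fun φ => visits M π φ ψ) (dom ψ) := by
  have visits_of_agree (φ φ' : E → O) (h : ∀ e ∈ dom ψ, φ e = φ' e) :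
      visits M π φ ψ → visits M π φ' ψ := by
    rintro ⟨n, rfl⟩
    exact ⟨n, (execAux_congr M h).symm⟩
  exact fun φ φ' h =>
    propext ⟨visits_of_agree φ φ' h, visits_of_agree φ' φ fun e he => (h e he).symm⟩

lemma mem_Ssel {π : Sub E O → E} {φ : E → O} {e : E} :
    e ∈ Ssel M π φ ↔ e ∈ dom (cover M π φ) := by
  simp [Ssel, dom]

-- As long as `e` is not selected, its state does not influence the execution.
lemma mem_Ssel_dependsOn (π : Sub E O → E) (e : E) :
    DependsOn (fun φ => e ∈ Ssel M π φ) {e}ᶜ := by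
  have notMem_of_agree (φ φ' : E → O) (h : ∀ e' ∈ ({e}ᶜ : Set E), φ e' = φ' e')
      (he : e ∉ Ssel M π φ) : e ∉ Ssel M π φ' := by
    rw [mem_Ssel] at he ⊢
    have cover_eq : cover M π φ = cover M π φ' :=
      execAux_congr M fun e' he' => h e' (ne_of_mem_of_not_mem he' he)
    rwa [← cover_eq]
  exact fun φ φ' h => propext <| not_iff_not.1
    ⟨notMem_of_agree φ φ' h, notMem_of_agree φ' φ fun e' he' => (h e' he').symm⟩

/-- The event that `π`, executed on `φ`, selects `e` at the subrealization `ψ`. -/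
def SelectsAt (π : Sub E O → E) (φ : E → O) (ψ : Sub E O) (e : E) : Prop :=
  visits M π φ ψ ∧ M.f ψ < M.Q ∧ π ψ = e

variable {M}

lemma IsPolicy.selectsAt_dependsOn {π : Sub E O → E} (hπ : IsPolicy M π) (ψ : Sub E O) (e : E) :
    DependsOn (fun φ => SelectsAt M π φ ψ e) {e}ᶜ := by
  intro φ φ' h
  refine propext (and_congr_left ?_)
  rintro ⟨hψ, rfl⟩
  have dom_subset : dom ψ ⊆ {π ψ}ᶜ := fun e he => ne_of_mem_of_not_mem he (not_not.2 (hπ ψ hψ))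
  exact ((visits_dependsOn M π ψ) fun e he => h e (dom_subset he)).to_iff

lemma IsPolicy.not_selected_twice {π : Sub E O → E} (hπ : IsPolicy M π) {φ : E → O} {m n : ℕ}
    (hmn : m < n) (hm : M.f (execAux M π φ m) < M.Q) (hn : M.f (execAux M π φ n) < M.Q) :
    π (execAux M π φ m) ≠ π (execAux M π φ n) := fun h =>
  (mem_dom_execAux M).2 ⟨m, hmn, hm, h⟩ (hπ _ hn)

lemma IsPolicy.existsUnique_selectsAt {π : Sub E O → E} (hπ : IsPolicy M π) {φ : E → O} {e : E}
    (he : e ∈ Ssel M π φ) : ∃! ψ, SelectsAt M π φ ψ e := by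
  obtain ⟨k, -, hk, rfl⟩ := (mem_dom_execAux M).1 ((mem_Ssel M).1 he)
  refine ⟨execAux M π φ k, ⟨⟨k, rfl⟩, hk, rfl⟩, ?_⟩
  rintro _ ⟨⟨n, rfl⟩, hn, hnk⟩
  rcases lt_trichotomy n k with hlt | rfl | hlt
  · exact absurd hnk (hπ.not_selected_twice hlt hn hk)
  · rfl
  · exact absurd hnk.symm (hπ.not_selected_twice hlt hk hn)

lemma IsPolicy.cost_sub_mu {σ : Sub E O → E} (hσ : IsPolicy M σ) (π : Sub E O → E) (e : E)
    (φ : E → O) :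
    (if e ∈ Ssel M π φ then M.c e else 0) - mu M σ π e φ =
      ∑ ψ, if e ∈ Ssel M π φ ∧ e ∈ Ssel M σ φ ∧ SelectsAt M σ φ ψ e
        then M.c e - price M ψ e * Fm M ψ e φ else 0 := by
  by_cases heπ : e ∈ Ssel M π φ
  · by_cases heσ : e ∈ Ssel M σ φ
    · obtain ⟨ψ, hψ, unique⟩ := hσ.existsUnique_selectsAt heσ
      have selectsAt_iff (ψ' : Sub E O) : SelectsAt M σ φ ψ' e ↔ ψ' = ψ :=
        ⟨unique ψ', fun h => h ▸ hψ⟩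
      simp only [SelectsAt] at selectsAt_iff
      simp [mu, SelectsAt, heπ, heσ, selectsAt_iff]
    · simp [mu, heπ, heσ]
  · simp [mu, heπ]

lemma IsPolicy.Ex_cost_eq_Ex_mu {σ : Sub E O → E} (hσ : IsPolicy M σ)
    (hF : ∀ ψ, M.f ψ < M.Q → Ex M (Fm M ψ (σ ψ)) ≠ 0) (π : Sub E O → E) (e : E) :
    Ex M (fun φ => if e ∈ Ssel M π φ then M.c e else 0) = Ex M (mu M σ π e) := by
  rw [← sub_eq_zero, ← Ex_sub]
  simp only [hσ.cost_sub_mu, Ex_sum]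
  refine Finset.sum_eq_zero fun ψ _ => ?_
  have event_dependsOn : DependsOn
      (fun φ => e ∈ Ssel M π φ ∧ e ∈ Ssel M σ φ ∧ SelectsAt M σ φ ψ e) {e}ᶜ := fun φ φ' h =>
    congr_arg₂ And (mem_Ssel_dependsOn M π e h)
      (congr_arg₂ And (mem_Ssel_dependsOn M σ e h) (hσ.selectsAt_dependsOn ψ e h))
  have loss_dependsOn : DependsOn (fun φ => M.c e - price M ψ e * Fm M ψ e φ) {e} :=
    fun φ φ' h => by simp only [Fm_dependsOn M ψ e h]
  by_cases hψ : M.f ψ < M.Q ∧ σ ψ = e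
  · obtain ⟨hQ, rfl⟩ := hψ
    rw [Ex_ite_eq_Pr_mul M event_dependsOn loss_dependsOn,
      Ex_cost_sub_price_mul_Fm_eq_zero M (hF ψ hQ), mul_zero]
  · simp only [SelectsAt, hψ, and_false, if_false, Ex_const]

lemma C_eq_sum_ite (π : Sub E O → E) (φ : E → O) :
    C M π φ = ∑ e, if e ∈ Ssel M π φ then M.c e else 0 := by
  simp only [C, Finset.sum_ite_mem, Finset.univ_inter]

theorem opt_cost_eq_revenue_general {σ : Sub E O → E} (hσ : IsPolicy M σ)
    (hF : ∀ ψ, M.f ψ < M.Q → Ex M (Fm M ψ (σ ψ)) ≠ 0) (π : Sub E O → E) :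
    Ex M (C M π) = Ex M (muStar M σ π) :=
  calc Ex M (C M π)
      = ∑ e, Ex M (fun φ => if e ∈ Ssel M π φ then M.c e else 0) := by
        rw [funext (C_eq_sum_ite π), Ex_sum]
    _ = ∑ e, Ex M (mu M σ π e) :=
        Finset.sum_congr rfl fun e _ => hσ.Ex_cost_eq_Ex_mu hF π e
    _ = Ex M (muStar M σ π) := (Ex_sum M _ _).symm

/-- The expected cost of the optimal policy equals its expected total
revenue: `E[C(π*)] = E[μ*]`. -/
theorem opt_cost_eq_revenue
    (M : Problem E O) (α : ℝ) (hα : 1 ≤ α)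
    (σ : Sub E O → E) (hσ : IsGreedy M α σ)
    (πs : Sub E O → E) (hπs : IsOptimal M πs) :
    Ex M (C M πs) = Ex M (muStar M σ πs) :=
  opt_cost_eq_revenue_general hσ.1 (fun _ => hσ.Ex_Fm_ne_zero) πs

end
end SSC
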